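/- Let G = (V,E) be a finite simple graph on n = |V| ≥ 1 vertices and let β ∈ [0, 1/2]. Then there exists a tree decomposition (X,T) of G of width equal to tw(G) such that at least one of the following holds: (a) there exists a bag Ω ∈ X such that Ω is a potential maximal clique of G and either V ∖ Ω = ∅ or some connected component C of G[V ∖ Ω] satisfies |C| ≤ βn; (b) there exists a bag S ∈ X and two distinct connected components C₁, C₂ of G[V ∖ S] such that N(C₁) = N(C₂) = S and |C₂| ≥ |C₁| ≥ βn. -/

import Mathlib

variable {V : Type} [Fintype V] [DecidableEq V]

/-- The neighborhood `N(B)` of a set of vertices `B`. -/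
def nbhdSet (G : SimpleGraph V) (B : Finset V) : Set V :=
  {v | v ∉ B ∧ ∃ u ∈ B, G.Adj u v}

/-- `Q_G(S,v)` (relative to a vertex subset `W`): the set of vertices `w ∈ W ∖ (S ∪ {v})`
such that `v` and `w` are connected by a path in `G[S ∪ {v,w}]`. -/
def QOn (G : SimpleGraph V) (W S : Finset V) (v : V) : Set V :=
  {w | w ∈ W ∧ w ∉ S ∧ w ≠ v ∧
    (G.induce ((S : Set V) ∪ {v, w})).Reachable ⟨v, by simp⟩ ⟨w, by simp⟩}

/-- `π` is a permutation of `W`, i.e. a bijection from `W` onto `{0, …, |W| - 1}`. -/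
def IsPermOn (W : Finset V) (π : V → ℕ) : Prop :=
  Set.BijOn π ↑W ↑(Finset.range W.card)

/-- `TW_{G[W]}(S) = min_{π ∈ Π(W)} max_{v ∈ S} |Q_{G[W]}(π_{<v}, v)|`. -/
noncomputable def TWOn (G : SimpleGraph V) (W S : Finset V) : ℕ :=
  sInf { m | ∃ π : V → ℕ, IsPermOn W π ∧
    m = S.sup fun v => (QOn G W (W.filter fun w => π w < π v) v).ncard }

/-- `TW_G(S)`. -/
noncomputable def TW (G : SimpleGraph V) (S : Finset V) : ℕ :=
  TWOn G Finset.univ S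

/-- `TWR_G(L,S)`: as `TW_G(S)` but minimizing only over permutations having `L` as a prefix. -/
noncomputable def TWR (G : SimpleGraph V) (L S : Finset V) : ℕ :=
  sInf { m | ∃ π : V → ℕ, IsPermOn Finset.univ π ∧
    (∀ w, w ∈ L ↔ π w < L.card) ∧
    m = S.sup fun v =>
      (QOn G Finset.univ (L ∪ Finset.univ.filter fun w => π w < π v) v).ncard }

/-- A tree decomposition of the induced subgraph `G[W]`. -/
structure TreeDecomp (G : SimpleGraph V) (W : Finset V) where
  ι : Type
  [instFintype : Fintype ι]
  tree : SimpleGraph ι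
  isTree : tree.IsTree
  bags : ι → Finset V
  bags_subset : ∀ i, bags i ⊆ W
  covers : ∀ v ∈ W, ∃ i, v ∈ bags i
  covers_edges : ∀ u v : V, u ∈ W → v ∈ W → G.Adj u v → ∃ i, u ∈ bags i ∧ v ∈ bags i
  subtree : ∀ (v : V) (i j : ι) (hi : v ∈ bags i) (hj : v ∈ bags j),
    (tree.induce {k | v ∈ bags k}).Reachable ⟨i, hi⟩ ⟨j, hj⟩

/-- The width of a tree decomposition: (maximum bag size) − 1. -/
noncomputable def TreeDecomp.width {G : SimpleGraph V} {W : Finset V}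
    (D : TreeDecomp G W) : ℤ :=
  letI := D.instFintype
  ((Finset.univ.sup fun i => (D.bags i).card : ℕ) : ℤ) - 1

/-- The treewidth of `G`. -/
noncomputable def tw (G : SimpleGraph V) : ℤ :=
  sInf { w : ℤ | ∃ D : TreeDecomp G Finset.univ, D.width = w }

/-- `tw(G[W], χ)`: the minimum width of a tree decomposition of `G[W]` having `χ` as a bag. -/
noncomputable def twBagOn (G : SimpleGraph V) (W χ : Finset V) : ℤ :=
  sInf { w : ℤ | ∃ D : TreeDecomp G W, (∃ i, D.bags i = χ) ∧ D.width = w }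

/-- `tw(G, χ)`. -/
noncomputable def twBag (G : SimpleGraph V) (χ : Finset V) : ℤ :=
  twBagOn G Finset.univ χ

/-- `P_π(v,w)`: there is a path from `v` to `w` in `G` all of whose internal vertices `u`
satisfy `π u < π v` and `π u < π w`. -/
def Ppred (G : SimpleGraph V) (π : V → ℕ) (v w : V) : Prop :=
  ∃ p : G.Walk v w, ∀ u ∈ p.support, u ≠ v → u ≠ w → π u < π v ∧ π u < π w

/-- `R_π(v)`. -/
noncomputable def Rval (G : SimpleGraph V) (π : V → ℕ) (v : V) : ℕ :=
  {w | π v < π w ∧ Ppred G π v w}.ncard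

/-- `C` is the vertex set of a connected component of `G[A]`. -/
def IsCompOf (G : SimpleGraph V) (A C : Finset V) : Prop :=
  C.Nonempty ∧ C ⊆ A ∧ (G.induce (C : Set V)).Connected ∧
    ∀ u ∈ C, ∀ v ∈ A, G.Adj u v → v ∈ C

/-- `Ω` is a potential maximal clique of `G`. -/
def PotMaxClique (G : SimpleGraph V) (Ω : Finset V) : Prop :=
  (∀ C : Finset V, IsCompOf G (Finset.univ \ Ω) C → nbhdSet G C ≠ ↑Ω) ∧
  ∀ u ∈ Ω, ∀ v ∈ Ω, u ≠ v →
    G.Adj u v ∨ ∃ C : Finset V, IsCompOf G (Finset.univ \ Ω) C ∧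
      u ∈ nbhdSet G C ∧ v ∈ nbhdSet G C

/-!
Among the tree decompositions refining an optimal one, choose one whose bags cover as few pairs of
vertices as possible. If two vertices `u`, `v` of a bag `Ω` were neither adjacent nor in the
neighborhood of a common component of `G[V ∖ Ω]`, then cutting the decomposition along `N(Z)`,
where `Z` is the component of `v` in `G[V ∖ (Ω ∖ {v})]`, would separate `u` from `v`. So every bag
satisfies condition (ii) of a potential maximal clique, and the inclusion-maximal bags satisfy
condition (i) as well, by the Helly property of subtrees.

Let `Ω` be a maximal bag and `C` a component of `G[V ∖ Ω]`. The separator `S = N(C)` has a second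
full component, namely the one meeting `Ω ∖ S`. Let `C₁` be the smaller of the two and `C₂` the
larger. If `C₁` is large, then adding `S` as a bag gives (b). Otherwise some bag contains `S` and
meets `C₂`; a maximal bag above it avoids `C₁`, so `C₁` is one of its components, and (a) holds.
-/

open SimpleGraph Finset

section Trees

variable {α γ : Type*} {T : SimpleGraph α} {U : SimpleGraph γ}

lemma reachable_map_of_forall_adj_reachable {f : α → γ}
    (hf : ∀ a b, T.Adj a b → U.Reachable (f a) (f b)) {a b : α} (h : T.Reachable a b) :
    U.Reachable (f a) (f b) := by
  simp only [reachable_iff_reflTransGen] at hf h ⊢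
  exact h.lift' f hf

lemma isAcyclic_sum (hT : T.IsAcyclic) (hU : U.IsAcyclic) : (T ⊕g U).IsAcyclic := by
  rw [isAcyclic_iff_forall_adj_isBridge] at hT hU ⊢
  rintro (a | a) (b | b) hab
  · refine isBridge_iff.2 fun h ↦ isBridge_iff.1 (hT (sum_adj_inl.1 hab)) ?_
    refine reachable_map_of_forall_adj_reachable (f := Sum.elim id fun _ ↦ a) ?_ h
    rintro (c | c) (d | d) hcd
    · exact Adj.reachable (by simpa [deleteEdges_adj] using hcd)
    all_goals simp [deleteEdges_adj] at hcd ⊢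
  · exact absurd hab (not_adj_sum_inl_inr a b)
  · exact absurd hab.symm (not_adj_sum_inl_inr b a)
  · refine isBridge_iff.2 fun h ↦ isBridge_iff.1 (hU (sum_adj_inr.1 hab)) ?_
    refine reachable_map_of_forall_adj_reachable (f := Sum.elim (fun _ ↦ a) id) ?_ h
    rintro (c | c) (d | d) hcd
    rotate_right
    · exact Adj.reachable (by simpa [deleteEdges_adj] using hcd)
    all_goals simp [deleteEdges_adj] at hcd ⊢

/-- The disjoint union of two graphs with one further edge, joining `a` to `b`; it is the shape of
a tree decomposition glued from two others. -/
def joinByEdge (T : SimpleGraph α) (U : SimpleGraph γ) (a : α) (b : γ) : SimpleGraph (α ⊕ γ) :=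
  (T ⊕g U) ⊔ edge (Sum.inl a) (Sum.inr b)

lemma isTree_joinByEdge (hT : T.IsTree) (hU : U.IsTree) (a : α) (b : γ) :
    (joinByEdge T U a b).IsTree :=
  ⟨hT.1.sum_sup_edge hU.1,
    (isAcyclic_sum hT.2 hU.2).sup_edge_of_not_reachable (not_reachable_sum_inl_inr a b)⟩

lemma preconnected_induce_joinByEdge {a : α} {b : γ} {s : Set (α ⊕ γ)}
    (hT : (T.induce (Sum.inl ⁻¹' s)).Preconnected) (hU : (U.induce (Sum.inr ⁻¹' s)).Preconnected)
    (hs : ∀ i j, Sum.inl i ∈ s → Sum.inr j ∈ s → Sum.inl a ∈ s ∧ Sum.inr b ∈ s) :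
    ((joinByEdge T U a b).induce s).Preconnected := by
  let inlHom : T.induce (Sum.inl ⁻¹' s) →g (joinByEdge T U a b).induce s :=
    ⟨fun i ↦ ⟨Sum.inl i, i.2⟩, fun h ↦ Or.inl (by simpa using h)⟩
  let inrHom : U.induce (Sum.inr ⁻¹' s) →g (joinByEdge T U a b).induce s :=
    ⟨fun j ↦ ⟨Sum.inr j, j.2⟩, fun h ↦ Or.inl (by simpa using h)⟩
  have reachable_inl_inr (i : α) (j : γ) (hi : Sum.inl i ∈ s) (hj : Sum.inr j ∈ s) :
      ((joinByEdge T U a b).induce s).Reachable ⟨Sum.inl i, hi⟩ ⟨Sum.inr j, hj⟩ := by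
    obtain ⟨ha, hb⟩ := hs i j hi hj
    have hab : ((joinByEdge T U a b).induce s).Adj ⟨Sum.inl a, ha⟩ ⟨Sum.inr b, hb⟩ :=
      Or.inr (by simp [edge_adj])
    exact ((hT ⟨i, hi⟩ ⟨a, ha⟩).map inlHom).trans
      (hab.reachable.trans ((hU ⟨b, hb⟩ ⟨j, hj⟩).map inrHom))
  rintro ⟨i | i, hi⟩ ⟨j | j, hj⟩
  · exact (hT ⟨i, hi⟩ ⟨j, hj⟩).map inlHom
  · exact reachable_inl_inr i j hi hj
  · exact (reachable_inl_inr j i hj hi).symm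
  · exact (hU ⟨i, hi⟩ ⟨j, hj⟩).map inrHom

end Trees

namespace IsCompOf

omit [Fintype V] [DecidableEq V]

variable {G : SimpleGraph V} {A C E : Finset V}

lemma subset (hC : IsCompOf G A C) : C ⊆ A := hC.2.1

lemma connected (hC : IsCompOf G A C) : (G.induce (C : Set V)).Connected := hC.2.2.1

lemma mem_of_adj (hC : IsCompOf G A C) {u v : V} (hu : u ∈ C) (hv : v ∈ A) (huv : G.Adj u v) :
    v ∈ C :=
  hC.2.2.2 u hu v hv huv

lemma subset_of_preconnected (hC : IsCompOf G A C) (hE : (G.induce (E : Set V)).Preconnected)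
    (hEA : E ⊆ A) {a : V} (haE : a ∈ E) (haC : a ∈ C) : E ⊆ C := by
  have mem_of_reflTransGen (b : (E : Set V))
      (hab : Relation.ReflTransGen (G.induce (E : Set V)).Adj ⟨a, haE⟩ b) : b.1 ∈ C := by
    induction hab with
    | refl => exact haC
    | @tail x y _ hxy hx => exact hC.mem_of_adj hx (hEA y.2) hxy
  exact fun b hb ↦ mem_of_reflTransGen ⟨b, hb⟩ ((reachable_iff_reflTransGen _ _).1 (hE _ _))

lemma eq_of_mem (hC : IsCompOf G A C) (hE : IsCompOf G A E) {a : V} (haC : a ∈ C) (haE : a ∈ E) :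
    C = E :=
  (hE.subset_of_preconnected hC.connected.preconnected hC.subset haC haE).antisymm
    (hC.subset_of_preconnected hE.connected.preconnected hE.subset haE haC)

end IsCompOf

section Components

variable {G : SimpleGraph V} {S C Ω : Finset V}

omit [Fintype V] [DecidableEq V] in
lemma exists_isCompOf_mem (G : SimpleGraph V) {A : Finset V} {x : V} (hx : x ∈ A) :
    ∃ C, IsCompOf G A C ∧ x ∈ C := by
  classical
  obtain ⟨C, ⟨hCA, hxC, hC⟩, hmax⟩ := Set.Finite.exists_maximal
    (s := {E : Finset V | E ⊆ A ∧ x ∈ E ∧ (G.induce (E : Set V)).Connected})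
    (A.powerset.finite_toSet.subset fun E hE ↦ by simpa using hE.1)
    ⟨{x}, by simpa using hx, by simp, by rw [coe_singleton]; exact .of_subsingleton⟩
  refine ⟨C, ⟨⟨x, hxC⟩, hCA, hC, fun u hu v hv huv ↦ ?_⟩, hxC⟩
  have hconn : (G.induce (insert v C : Finset V)).Connected := by
    rw [coe_insert, show insert v (C : Set V) = (C : Set V) ∪ {u, v} by grind]
    exact induce_union_connected hC.preconnected (induce_pair_connected_of_adj huv).preconnected
      ⟨u, hu, by simp⟩
  exact hmax ⟨insert_subset hv hCA, mem_insert_of_mem hxC, hconn⟩ (subset_insert v C)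
    (mem_insert_self v C)

lemma isCompOf_univ_sdiff_iff :
    IsCompOf G (univ \ S) C ↔ C.Nonempty ∧ Disjoint C S ∧ (G.induce (C : Set V)).Connected ∧
      nbhdSet G C ⊆ S := by
  have hsub : C ⊆ univ \ S ↔ Disjoint C S := by
    simp [subset_iff, Finset.disjoint_left]
  have hclosed : (∀ u ∈ C, ∀ v ∈ univ \ S, G.Adj u v → v ∈ C) ↔ nbhdSet G C ⊆ S := by
    simp only [nbhdSet, Set.subset_def, Set.mem_ofPred_eq, mem_coe]
    grind
  rw [IsCompOf, hsub, hclosed]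

/-- `C` is a full component of the separator `S`: a component of `G[V ∖ S]` adjacent to every
vertex of `S`. -/
def IsFullComp (G : SimpleGraph V) (S C : Finset V) : Prop :=
  IsCompOf G (univ \ S) C ∧ nbhdSet G C = S

lemma IsCompOf.exists_isFullComp (hC : IsCompOf G (univ \ Ω) C) : ∃ S ⊆ Ω, IsFullComp G S C := by
  obtain ⟨hne, hdisj, hconn, hN⟩ := isCompOf_univ_sdiff_iff.1 hC
  lift nbhdSet G C to Finset V using Set.toFinite _ with S hS
  have hSΩ : S ⊆ Ω := coe_subset.1 hN
  exact ⟨S, hSΩ, isCompOf_univ_sdiff_iff.2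
    ⟨hne, hdisj.mono_right hSΩ, hconn, hS.ge⟩, hS.symm⟩

end Components

/-- Condition (ii) in the definition of a potential maximal clique: `Ω` becomes a clique once the
neighborhood of every component of `G[V ∖ Ω]` is completed. -/
def IsCliquish (G : SimpleGraph V) (Ω : Finset V) : Prop :=
  ∀ u ∈ Ω, ∀ v ∈ Ω, u ≠ v →
    G.Adj u v ∨ ∃ C : Finset V, IsCompOf G (univ \ Ω) C ∧ u ∈ nbhdSet G C ∧ v ∈ nbhdSet G C

section Cliquish

variable {G : SimpleGraph V} {S Z K C Ω : Finset V} {u v : V}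

lemma adj_or_exists_isCompOf_of_mem_nbhdSet (hZ : IsCompOf G (univ \ Ω.erase v) Z) (hvZ : v ∈ Z)
    (hv : v ∈ Ω) (hu : u ∈ nbhdSet G Z) :
    G.Adj u v ∨ ∃ C, IsCompOf G (univ \ Ω) C ∧ u ∈ nbhdSet G C ∧ v ∈ nbhdSet G C := by
  obtain ⟨huZ, w, hwZ, hwu⟩ := hu
  by_cases hwv : w = v
  · exact Or.inl (hwv ▸ hwu.symm)
  have hwΩ : w ∈ univ \ Ω := by grind [hZ.subset hwZ]
  obtain ⟨C, hC, hwC⟩ := exists_isCompOf_mem G hwΩ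
  obtain ⟨hne, hdisj, hconn, hN⟩ := isCompOf_univ_sdiff_iff.1 hC
  have hvC : v ∉ C := Finset.disjoint_right.1 hdisj hv
  have hdisj' : Disjoint C (Ω.erase v) := hdisj.mono_right (erase_subset v Ω)
  have hCZ : C ⊆ Z := hZ.subset_of_preconnected hconn.preconnected
    (by simpa [subset_iff, Finset.disjoint_left] using hdisj') hwC hwZ
  refine Or.inr ⟨C, hC, ⟨fun huC ↦ huZ (hCZ huC), w, hwC, hwu⟩, ?_⟩
  by_contra hvN
  -- Otherwise `C` would be a component of `G[V ∖ (Ω ∖ {v})]` as well, hence equal to `Z ∋ v`.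
  have hC' : IsCompOf G (univ \ Ω.erase v) C := isCompOf_univ_sdiff_iff.2
    ⟨hne, hdisj', hconn, fun x hx ↦ by
      have := hN hx
      simp only [mem_coe, mem_erase] at this ⊢
      exact ⟨fun hxv ↦ hvN (hxv ▸ hx), this⟩⟩
  exact hvC (hC'.eq_of_mem hZ hwC hwZ ▸ hvZ)

lemma IsCliquish.mem_nbhdSet (hΩ : IsCliquish G Ω) (hSΩ : S ⊆ Ω) (hK : IsCompOf G (univ \ S) K)
    (hu : u ∈ Ω) (huK : u ∈ K) (hv : v ∈ Ω) (hvK : v ∉ K) : v ∈ nbhdSet G K := by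
  refine ⟨hvK, ?_⟩
  obtain huv | ⟨C, hC, ⟨-, a, haC, hau⟩, -, b, hbC, hbv⟩ :=
    hΩ u hu v hv (ne_of_mem_of_not_mem huK hvK)
  · exact ⟨u, huK, huv⟩
  · have hCS : C ⊆ univ \ S := hC.subset.trans (sdiff_subset_sdiff subset_rfl hSΩ)
    have haK : a ∈ K := hK.mem_of_adj huK (hCS haC) hau.symm
    exact ⟨b, hK.subset_of_preconnected hC.connected.preconnected hCS haC haK hbC, hbv⟩

lemma PotMaxClique.exists_isFullComp_ne (hΩ : PotMaxClique G Ω) (hC : IsCompOf G (univ \ Ω) C) :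
    ∃ S ⊆ Ω, IsFullComp G S C ∧ ∃ C', IsFullComp G S C' ∧ C ≠ C' := by
  obtain ⟨S, hSΩ, hCS⟩ := hC.exists_isFullComp
  have hSne : S ≠ Ω := fun h ↦ hΩ.1 C hC (h ▸ hCS.2)
  obtain ⟨y, hyΩ, hyS⟩ := exists_of_ssubset (hSΩ.ssubset_of_ne hSne)
  obtain ⟨C', hC', hyC'⟩ := exists_isCompOf_mem G (mem_sdiff.2 ⟨mem_univ y, hyS⟩)
  have hdisj := (isCompOf_univ_sdiff_iff.1 hC').2.1
  refine ⟨S, hSΩ, hCS, C', ⟨hC', (isCompOf_univ_sdiff_iff.1 hC').2.2.2.antisymm fun s hs ↦ ?_⟩, ?_⟩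
  · exact IsCliquish.mem_nbhdSet hΩ.2 hSΩ hC' hyΩ hyC' (hSΩ hs) (Finset.disjoint_right.1 hdisj hs)
  · rintro rfl
    exact (mem_sdiff.1 (hC.subset hyC')).2 hyΩ

lemma PotMaxClique.exists_isFullComp_card_le (hΩ : PotMaxClique G Ω) (hne : univ \ Ω ≠ ∅) :
    ∃ S ⊆ Ω, ∃ C₁ C₂, IsFullComp G S C₁ ∧ IsFullComp G S C₂ ∧ C₁ ≠ C₂ ∧ #C₁ ≤ #C₂ := by
  obtain ⟨x, hx⟩ := nonempty_iff_ne_empty.2 hne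
  obtain ⟨C, hC, -⟩ := exists_isCompOf_mem G hx
  obtain ⟨S, hSΩ, hCS, C', hC'S, hCC'⟩ := hΩ.exists_isFullComp_ne hC
  obtain hle | hle := le_total #C #C'
  · exact ⟨S, hSΩ, C, C', hCS, hC'S, hCC', hle⟩
  · exact ⟨S, hSΩ, C', C, hC'S, hCS, hCC'.symm, hle⟩

end Cliquish

namespace TreeDecomp

variable {G : SimpleGraph V} {W : Finset V}

section Width

omit [Fintype V] [DecidableEq V]

lemma neg_one_le_width (D : TreeDecomp G W) : -1 ≤ D.width := by
  unfold width
  lia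

/-- Every bag of `D'` is contained in a bag of `D`. -/
def Refines (D' D : TreeDecomp G W) : Prop :=
  ∀ i, ∃ j, D'.bags i ⊆ D.bags j

lemma Refines.refl (D : TreeDecomp G W) : D.Refines D :=
  fun i ↦ ⟨i, subset_rfl⟩

lemma Refines.trans {D₁ D₂ D₃ : TreeDecomp G W} (h₁₂ : D₁.Refines D₂) (h₂₃ : D₂.Refines D₃) :
    D₁.Refines D₃ := fun i ↦ by
  obtain ⟨j, hij⟩ := h₁₂ i
  obtain ⟨k, hjk⟩ := h₂₃ j
  exact ⟨k, hij.trans hjk⟩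

lemma Refines.width_le {D' D : TreeDecomp G W} (h : D'.Refines D) : D'.width ≤ D.width := by
  let := D.instFintype
  let := D'.instFintype
  refine sub_le_sub_right (Nat.cast_le.2 (Finset.sup_le fun i _ ↦ ?_)) 1
  obtain ⟨j, hij⟩ := h i
  exact (card_le_card hij).trans (le_sup (f := fun j ↦ #(D.bags j)) (mem_univ j))

/-- The decomposition of `G[W]` with the single bag `W`. -/
def singleBag (G : SimpleGraph V) (W : Finset V) : TreeDecomp G W where
  ι := Unit
  tree := ⊥
  isTree := .of_subsingleton
  bags _ := W
  bags_subset _ := subset_rfl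
  covers _ hv := ⟨(), hv⟩
  covers_edges _ _ hu hv _ := ⟨(), hu, hv⟩
  subtree _ _ _ _ _ := .rfl

end Width

section Treewidth

omit [DecidableEq V]

lemma bddBelow_width (G : SimpleGraph V) :
    BddBelow {w : ℤ | ∃ D : TreeDecomp G univ, D.width = w} :=
  ⟨-1, by rintro _ ⟨D, rfl⟩; exact D.neg_one_le_width⟩

lemma exists_width_eq_tw (G : SimpleGraph V) : ∃ D : TreeDecomp G univ, D.width = tw G :=
  Int.csInf_mem (s := {w | ∃ D : TreeDecomp G univ, D.width = w})
    ⟨_, singleBag G univ, rfl⟩ (bddBelow_width G)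

lemma Refines.width_eq_tw {D' D : TreeDecomp G univ} (h : D'.Refines D) (hD : D.width = tw G) :
    D'.width = tw G :=
  (h.width_le.trans_eq hD).antisymm (csInf_le (bddBelow_width G) ⟨D', rfl⟩)

end Treewidth

section Glue

omit [Fintype V]

/-- The decomposition of `G[A]` whose bags are the traces on `A` of the bags of `D`. -/
def restrict (D : TreeDecomp G W) {A : Finset V} (hAW : A ⊆ W) : TreeDecomp G A :=
  letI := D.instFintype
  { ι := D.ι
    tree := D.tree
    isTree := D.isTree
    bags := fun i ↦ D.bags i ∩ A
    bags_subset := fun _ ↦ inter_subset_right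
    covers := fun v hv ↦ by
      obtain ⟨i, hi⟩ := D.covers v (hAW hv)
      exact ⟨i, mem_inter.2 ⟨hi, hv⟩⟩
    covers_edges := fun u v hu hv huv ↦ by
      obtain ⟨i, hui, hvi⟩ := D.covers_edges u v (hAW hu) (hAW hv) huv
      exact ⟨i, mem_inter.2 ⟨hui, hu⟩, mem_inter.2 ⟨hvi, hv⟩⟩
    subtree := fun v i j hi hj ↦
      (D.subtree v i j (mem_inter.1 hi).1 (mem_inter.1 hj).1).map
        (D.tree.induceHomOfLE (s := {k | v ∈ D.bags k}) (s' := {k | v ∈ D.bags k ∩ A})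
          fun _ hk ↦ mem_inter.2 ⟨hk, (mem_inter.1 hi).2⟩).toHom }

/-- The decomposition obtained from `D₁` and `D₂` by joining the nodes `i₁` and `i₂`, whose bags
contain the overlap of the two parts. -/
def glue {W₁ W₂ : Finset V} (D₁ : TreeDecomp G W₁) (D₂ : TreeDecomp G W₂)
    (hW : W₁ ∪ W₂ = W)
    (hedge : ∀ u ∈ W, ∀ v ∈ W, G.Adj u v → (u ∈ W₁ ∧ v ∈ W₁) ∨ (u ∈ W₂ ∧ v ∈ W₂))
    (i₁ : D₁.ι) (i₂ : D₂.ι) (hi₁ : W₁ ∩ W₂ ⊆ D₁.bags i₁) (hi₂ : W₁ ∩ W₂ ⊆ D₂.bags i₂) :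
    TreeDecomp G W :=
  letI := D₁.instFintype
  letI := D₂.instFintype
  { ι := D₁.ι ⊕ D₂.ι
    tree := joinByEdge D₁.tree D₂.tree i₁ i₂
    isTree := isTree_joinByEdge D₁.isTree D₂.isTree i₁ i₂
    bags := Sum.elim D₁.bags D₂.bags
    bags_subset := by
      rintro (i | i)
      · exact (D₁.bags_subset i).trans (hW ▸ subset_union_left)
      · exact (D₂.bags_subset i).trans (hW ▸ subset_union_right)
    covers := fun v hv ↦ by
      obtain hv | hv := mem_union.1 (hW ▸ hv)
      · exact Sum.exists.2 (.inl (D₁.covers v hv))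
      · exact Sum.exists.2 (.inr (D₂.covers v hv))
    covers_edges := fun u v hu hv huv ↦ by
      obtain ⟨hu, hv⟩ | ⟨hu, hv⟩ := hedge u hu v hv huv
      · exact Sum.exists.2 (.inl (D₁.covers_edges u v hu hv huv))
      · exact Sum.exists.2 (.inr (D₂.covers_edges u v hu hv huv))
    subtree := fun v i j hi hj ↦ preconnected_induce_joinByEdge
      (s := {k | v ∈ Sum.elim D₁.bags D₂.bags k})
      (fun i j ↦ D₁.subtree v i j i.2 j.2) (fun i j ↦ D₂.subtree v i j i.2 j.2)
      (fun i j hi hj ↦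
        have hv := mem_inter.2 ⟨D₁.bags_subset i hi, D₂.bags_subset j hj⟩
        ⟨hi₁ hv, hi₂ hv⟩) ⟨i, hi⟩ ⟨j, hj⟩ }

lemma exists_refines_forall_bags_subset_or_subset (D : TreeDecomp G W) {A B : Finset V}
    (hW : A ∪ B = W)
    (hedge : ∀ u ∈ W, ∀ v ∈ W, G.Adj u v → (u ∈ A ∧ v ∈ A) ∨ (u ∈ B ∧ v ∈ B)) {k : D.ι}
    (hk : A ∩ B ⊆ D.bags k) :
    ∃ D' : TreeDecomp G W, D'.Refines D ∧ ∀ i, D'.bags i ⊆ A ∨ D'.bags i ⊆ B := by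
  refine ⟨(D.restrict (hW ▸ subset_union_left)).glue (D.restrict (hW ▸ subset_union_right))
    hW hedge k k (subset_inter hk inter_subset_left)
    (subset_inter hk inter_subset_right), ?_, ?_⟩
  · rintro (i | i) <;> exact ⟨i, inter_subset_left⟩
  · rintro (i | i)
    exacts [.inl inter_subset_right, .inr inter_subset_right]

omit [DecidableEq V] in
lemma exists_refines_bags_eq (D : TreeDecomp G W) {S : Finset V} {k : D.ι} (hS : S ⊆ D.bags k) :
    ∃ D' : TreeDecomp G W, D'.Refines D ∧ ∃ i, D'.bags i = S := by
  classical
  refine ⟨D.glue (singleBag G S) (union_eq_left.2 (hS.trans (D.bags_subset k)))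
    (fun u hu v hv _ ↦ .inl ⟨hu, hv⟩) k () (inter_subset_right.trans hS) inter_subset_right,
    ?_, Sum.inr (), rfl⟩
  rintro (i | i)
  exacts [⟨i, subset_rfl⟩, ⟨k, hS⟩]

end Glue

section Helly

omit [Fintype V] [DecidableEq V]

variable (D : TreeDecomp G W) {S C : Finset V} {i j k l : D.ι}

lemma reachable_deleteEdges_of_mem_bags {v : V} (hv : v ∉ D.bags i ∨ v ∉ D.bags j)
    (hk : v ∈ D.bags k) (hl : v ∈ D.bags l) :
    (D.tree.deleteEdges {s(i, j)}).Reachable k l := by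
  refine (D.subtree v k l hk hl).map ⟨Subtype.val, fun {a b} hab ↦ deleteEdges_adj.2 ⟨hab, ?_⟩⟩
  intro h
  have ha : v ∈ D.bags a := a.2
  have hb : v ∈ D.bags b := b.2
  obtain ⟨rfl, rfl⟩ | ⟨rfl, rfl⟩ := Sym2.eq_iff.1 h <;> tauto

lemma reachable_deleteEdges_of_preconnected (hC : (G.induce (C : Set V)).Preconnected)
    (hCW : C ⊆ W) (hij : ∀ c ∈ C, c ∉ D.bags i ∨ c ∉ D.bags j) {c d : V} (hc : c ∈ C) (hd : d ∈ C)
    (hk : c ∈ D.bags k) (hl : d ∈ D.bags l) :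
    (D.tree.deleteEdges {s(i, j)}).Reachable k l := by
  choose node hnode using fun c : C ↦ D.covers c (hCW c.2)
  have hadj (a b : C) (hab : G.Adj a b) :
      (D.tree.deleteEdges {s(i, j)}).Reachable (node a) (node b) := by
    obtain ⟨m, ham, hbm⟩ := D.covers_edges a b (hCW a.2) (hCW b.2) hab
    exact (D.reachable_deleteEdges_of_mem_bags (hij a a.2) (hnode a) ham).trans
      (D.reachable_deleteEdges_of_mem_bags (hij b b.2) hbm (hnode b))
  have hcd := reachable_map_of_forall_adj_reachable hadj (hC ⟨c, hc⟩ ⟨d, hd⟩)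
  exact (D.reachable_deleteEdges_of_mem_bags (hij c hc) hk (hnode ⟨c, hc⟩)).trans
    (hcd.trans (D.reachable_deleteEdges_of_mem_bags (hij d hd) (hnode ⟨d, hd⟩) hl))

lemma subset_bags_of_adj (hC : (G.induce (C : Set V)).Preconnected) (hCW : C ⊆ W)
    (hS : (S : Set V) ⊆ nbhdSet G C) (hSi : S ⊆ D.bags i) (hCi : Disjoint C (D.bags i))
    (hij : D.tree.Adj i j) {c : V} (hc : c ∈ C) (hck : c ∈ D.bags k)
    (hjk : (D.tree.deleteEdges {s(i, j)}).Reachable j k) : S ⊆ D.bags j := by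
  intro s hs
  by_contra hsj
  obtain ⟨-, d, hd, hds⟩ := hS hs
  obtain ⟨m, hdm, hsm⟩ := D.covers_edges d s (hCW hd) (D.bags_subset i (hSi hs)) hds
  have him := D.reachable_deleteEdges_of_mem_bags (i := i) (.inr hsj) (hSi hs) hsm
  have hmk := D.reachable_deleteEdges_of_preconnected hC hCW (j := j)
    (fun x hx ↦ .inl (Finset.disjoint_left.1 hCi hx)) hd hc hdm hck
  exact isBridge_iff.1 (isAcyclic_iff_forall_adj_isBridge.1 D.isTree.2 hij)
    ((him.trans hmk).trans hjk.symm)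

-- Walk from a bag containing `S` towards one meeting `C`: as long as `C` has not been met, `S` is
-- carried along to the next bag.
lemma exists_subset_bags_not_disjoint (hC : (G.induce (C : Set V)).Connected) (hCW : C ⊆ W)
    (hS : (S : Set V) ⊆ nbhdSet G C) (hSi : S ⊆ D.bags i) :
    ∃ k, S ⊆ D.bags k ∧ ¬ Disjoint C (D.bags k) := by
  obtain ⟨c, hc⟩ := hC.nonempty
  obtain ⟨t, ht⟩ := D.covers c (hCW hc)
  obtain ⟨p, hp⟩ := (D.isTree.1.preconnected i t).exists_isPath
  induction p with
  | nil => exact ⟨_, hSi, Finset.not_disjoint_iff.2 ⟨c, hc, ht⟩⟩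
  | @cons i j t hij p ih =>
    by_cases hCi : Disjoint C (D.bags i)
    · rw [Walk.cons_isPath_iff] at hp
      have hjt : (D.tree.deleteEdges {s(i, j)}).Reachable j t :=
        reachable_deleteEdges_iff_exists_walk.2
          ⟨p, fun he ↦ hp.2 (p.fst_mem_support_of_mem_edges he)⟩
      exact ih (D.subset_bags_of_adj hC.preconnected hCW hS hSi hCi hij hc ht hjt) ht hp.1
    · exact ⟨i, hSi, hCi⟩

end Helly

section CoveredPairs

omit [Fintype V] [DecidableEq V]

/-- The pairs of vertices lying in a common bag, that is, the edges (and loops) of the chordal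
completion of `G` given by `D`. -/
def coveredPairs (D : TreeDecomp G W) : Set (V × V) :=
  {p | ∃ i, p.1 ∈ D.bags i ∧ p.2 ∈ D.bags i}

lemma Refines.coveredPairs_subset {D' D : TreeDecomp G W} (h : D'.Refines D) :
    D'.coveredPairs ⊆ D.coveredPairs := by
  rintro p ⟨i, hi₁, hi₂⟩
  obtain ⟨j, hij⟩ := h i
  exact ⟨j, hij hi₁, hij hi₂⟩

end CoveredPairs

section Cliquish

lemma exists_refines_notMem_coveredPairs (D : TreeDecomp G univ) {S Z : Finset V} {k : D.ι}
    (hZ : IsFullComp G S Z) (hS : S ⊆ D.bags k) {u v : V} (hu : u ∉ Z ∪ S) (hv : v ∈ Z) :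
    ∃ D' : TreeDecomp G univ, D'.Refines D ∧ (u, v) ∉ D'.coveredPairs := by
  have hclosed (a b : V) (ha : a ∈ Z) (hab : G.Adj a b) : b ∈ Z ∪ S := by
    by_contra hb
    rw [mem_union, not_or] at hb
    exact hb.1 (hZ.1.mem_of_adj ha (by simpa using hb.2) hab)
  obtain ⟨D', hD', hbags⟩ := D.exists_refines_forall_bags_subset_or_subset (A := univ \ Z)
    (B := Z ∪ S) (by grind) (fun a _ b _ hab ↦ by grind [hclosed a b, hclosed b a, hab.symm])
    (k := k) (by grind)
  refine ⟨D', hD', ?_⟩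
  rintro ⟨i, hui, hvi⟩
  obtain hi | hi := hbags i
  · exact (mem_sdiff.1 (hi hvi)).2 hv
  · exact hu (hi hui)

lemma exists_refines_coveredPairs_ssubset (D : TreeDecomp G univ) {k : D.ι}
    (hk : ¬ IsCliquish G (D.bags k)) :
    ∃ D' : TreeDecomp G univ, D'.Refines D ∧ D'.coveredPairs ⊂ D.coveredPairs := by
  unfold IsCliquish at hk
  push Not at hk
  obtain ⟨u, hu, v, hv, huv, hadj, hcomp⟩ := hk
  obtain ⟨Z, hZ, hvZ⟩ := exists_isCompOf_mem G (A := univ \ (D.bags k).erase v) (x := v) (by simp)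
  obtain ⟨S, hS, hZS⟩ := hZ.exists_isFullComp
  have huZ : u ∉ Z := fun h ↦ by grind [hZ.subset h]
  have huS : u ∉ S := fun h ↦ by
    have huN : u ∈ nbhdSet G Z := hZS.2 ▸ h
    obtain h | ⟨C, hC, huC, hvC⟩ := adj_or_exists_isCompOf_of_mem_nbhdSet hZ hvZ hv huN
    exacts [hadj h, hcomp C hC huC hvC]
  obtain ⟨D', hD', hnot⟩ := D.exists_refines_notMem_coveredPairs hZS
    (hS.trans (erase_subset v _)) (u := u) (by simp [huZ, huS]) hvZ
  exact ⟨D', hD', (Set.ssubset_iff_of_subset hD'.coveredPairs_subset).2 ⟨(u, v), ⟨k, hu, hv⟩, hnot⟩⟩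

lemma exists_refines_forall_isCliquish (D₀ : TreeDecomp G univ) :
    ∃ D : TreeDecomp G univ, D.Refines D₀ ∧ ∀ k, IsCliquish G (D.bags k) := by
  obtain ⟨D, hD, hmin⟩ := exists_minimalFor_of_wellFoundedLT
    (fun D : TreeDecomp G univ ↦ D.Refines D₀) coveredPairs ⟨D₀, .refl D₀⟩
  refine ⟨D, hD, fun k ↦ ?_⟩
  by_contra hk
  obtain ⟨D', hD', hlt⟩ := D.exists_refines_coveredPairs_ssubset hk
  exact hlt.not_subset (hmin (hD'.trans hD) hlt.subset)

variable (D : TreeDecomp G univ)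

lemma potMaxClique_of_maximal (hD : ∀ k, IsCliquish G (D.bags k)) {k : D.ι}
    (hk : ∀ l, D.bags k ⊆ D.bags l → D.bags l ⊆ D.bags k) : PotMaxClique G (D.bags k) := by
  refine ⟨fun C hC hN ↦ ?_, hD k⟩
  obtain ⟨l, hkl, hCl⟩ := D.exists_subset_bags_not_disjoint hC.connected (subset_univ C) hN.ge
    subset_rfl
  exact hCl ((isCompOf_univ_sdiff_iff.1 hC).2.1.mono_right (hk l hkl))

lemma exists_potMaxClique_superset (hD : ∀ k, IsCliquish G (D.bags k)) (k : D.ι) :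
    ∃ m, D.bags k ⊆ D.bags m ∧ PotMaxClique G (D.bags m) := by
  let := D.instFintype
  obtain ⟨m, hkm, hm⟩ := exists_maximalFor_of_wellFoundedGT (fun m ↦ D.bags k ⊆ D.bags m) D.bags
    ⟨k, subset_rfl⟩
  exact ⟨m, hkm, D.potMaxClique_of_maximal hD fun l hml ↦ hm (hkm.trans hml) hml⟩

lemma exists_potMaxClique_isCompOf (hD : ∀ k, IsCliquish G (D.bags k)) {S C₁ C₂ : Finset V}
    {k : D.ι} (hS : S ⊆ D.bags k) (hC₁ : IsFullComp G S C₁) (hC₂ : IsFullComp G S C₂)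
    (hne : C₁ ≠ C₂) :
    ∃ m, PotMaxClique G (D.bags m) ∧ IsCompOf G (univ \ D.bags m) C₁ := by
  obtain ⟨l, hSl, hC₂l⟩ := D.exists_subset_bags_not_disjoint hC₂.1.connected (subset_univ C₂)
    hC₂.2.ge hS
  obtain ⟨m, hlm, hm⟩ := D.exists_potMaxClique_superset hD l
  obtain ⟨c, hcC₂, hcl⟩ := Finset.not_disjoint_iff.1 hC₂l
  have hSm : S ⊆ D.bags m := hSl.trans hlm
  obtain ⟨hC₁ne, hC₁S, hC₁conn, hN⟩ := isCompOf_univ_sdiff_iff.1 hC₁.1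
  have hC₁m : Disjoint C₁ (D.bags m) := by
    refine Finset.disjoint_left.2 fun z hzC₁ hzm ↦ Finset.disjoint_left.1 hC₁S hzC₁ ?_
    have hzC₂ : z ∉ C₂ := fun hz ↦ hne (hC₁.1.eq_of_mem hC₂.1 hzC₁ hz)
    have hzN : z ∈ nbhdSet G C₂ := (hD m).mem_nbhdSet hSm hC₂.1 (hlm hcl) hcC₂ hzm hzC₂
    rwa [hC₂.2, mem_coe] at hzN
  exact ⟨m, hm, isCompOf_univ_sdiff_iff.2
    ⟨hC₁ne, hC₁m, hC₁conn, hN.trans (coe_subset.2 hSm)⟩⟩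

end Cliquish

end TreeDecomp

theorem stmt13_general {G : SimpleGraph V} (D₀ : TreeDecomp G univ) (t : ℝ) :
    ∃ D : TreeDecomp G univ, D.Refines D₀ ∧
      ((∃ i : D.ι, PotMaxClique G (D.bags i) ∧
          (univ \ D.bags i = ∅ ∨
            ∃ C : Finset V, IsCompOf G (univ \ D.bags i) C ∧ (#C : ℝ) ≤ t)) ∨
       (∃ i : D.ι, ∃ C₁ C₂ : Finset V,
          IsCompOf G (univ \ D.bags i) C₁ ∧ IsCompOf G (univ \ D.bags i) C₂ ∧ C₁ ≠ C₂ ∧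
          nbhdSet G C₁ = ↑(D.bags i) ∧ nbhdSet G C₂ = ↑(D.bags i) ∧
          t ≤ (#C₁ : ℝ) ∧ #C₁ ≤ #C₂)) := by
  obtain ⟨D, hD₀, hD⟩ := D₀.exists_refines_forall_isCliquish
  obtain ⟨k₀⟩ := D.isTree.1.nonempty
  obtain ⟨k, -, hk⟩ := D.exists_potMaxClique_superset hD k₀
  by_cases hne : univ \ D.bags k = ∅
  · exact ⟨D, hD₀, .inl ⟨k, hk, .inl hne⟩⟩
  obtain ⟨S, hS, C₁, C₂, hC₁, hC₂, hC, hle⟩ := hk.exists_isFullComp_card_le hne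
  by_cases hC₁t : (#C₁ : ℝ) ≤ t
  · obtain ⟨m, hm, hC₁m⟩ := D.exists_potMaxClique_isCompOf hD hS hC₁ hC₂ hC
    exact ⟨D, hD₀, .inl ⟨m, hm, .inr ⟨C₁, hC₁m, hC₁t⟩⟩⟩
  · obtain ⟨D', hD', i, rfl⟩ := D.exists_refines_bags_eq hS
    exact ⟨D', hD'.trans hD₀, .inr ⟨i, C₁, C₂, hC₁.1, hC₂.1, hC, hC₁.2, hC₂.2,
      (not_le.1 hC₁t).le, hle⟩⟩

theorem stmt13 [Nonempty V] (G : SimpleGraph V) (β : ℝ)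
    (hβ0 : 0 ≤ β) (hβ1 : β ≤ 1/2) :
    ∃ D : TreeDecomp G (Finset.univ : Finset V), D.width = tw G ∧
      ((∃ i : D.ι, PotMaxClique G (D.bags i) ∧
          (Finset.univ \ D.bags i = ∅ ∨
            ∃ C : Finset V, IsCompOf G (Finset.univ \ D.bags i) C ∧
              (C.card : ℝ) ≤ β * Fintype.card V)) ∨
       (∃ i : D.ι, ∃ C₁ C₂ : Finset V,
          IsCompOf G (Finset.univ \ D.bags i) C₁ ∧
          IsCompOf G (Finset.univ \ D.bags i) C₂ ∧ C₁ ≠ C₂ ∧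
          nbhdSet G C₁ = ↑(D.bags i) ∧ nbhdSet G C₂ = ↑(D.bags i) ∧
          β * Fintype.card V ≤ (C₁.card : ℝ) ∧ C₁.card ≤ C₂.card)) := by
  obtain ⟨D₀, hD₀⟩ := TreeDecomp.exists_width_eq_tw G
  obtain ⟨D, hDD₀, hD⟩ := stmt13_general D₀ (β * Fintype.card V)
  exact ⟨D, hDD₀.width_eq_tw hD₀, hD⟩
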